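/- Let n ≥ 0 and let κ = (κ_1,…,κ_ℓ) ∈ Z^ℓ satisfy κ_l − κ_{l+1} > n for 1 ≤ l < ℓ. Let λ be an ℓ-multipartition of n and let s, t ∈ Std(λ) with t = s(r,r+1) for some 1 ≤ r < n and s ⊳ t. Set ρ_r(u) = c_r(u) − c_{r+1}(u). Then in the field Q(t) of rational functions: ([1+ρ_r(s)]_t · [1+ρ_r(t)]_t) / ([ρ_r(s)]_t · [ρ_r(t)]_t) = t · ∏_{e≥2} Φ_e(t)^{d_e}, where for each integer e ≥ 2 the exponent d_e is determined by the residues i = res_s(r) and j = res_s(r+1) modulo e as follows: d_e = −2 if i = j; d_e = 2 if e = 2 and j = i+1; d_e = 1 if e > 2 and (j = i+1 or i = j+1); and d_e = 0 otherwise. Moreover d_e = deg_e(t) − deg_e(s), so the left-hand side equals t · ∏_{e≥2} Φ_e(t)^{deg_e(t) − deg_e(s)}. -/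

import Mathlib

open scoped BigOperators
open scoped Classical

namespace Paper

/-! ## Quantum integers -/

/-- The quantum integer `[d]_x` in a field, for `d ∈ ℤ`. -/
noncomputable def qint {K : Type*} [Field K] (x : K) (d : ℤ) : K :=
  if 0 ≤ d then ∑ k ∈ Finset.range d.toNat, x ^ k
  else -∑ k ∈ Finset.range (-d).toNat, x ^ (-((k : ℤ) + 1))

/-- The quantum integer `[d]_t` in a commutative ring, for an invertible `t` and `d ∈ ℤ`. -/
def qintU {O : Type*} [CommRing O] (t : Oˣ) (d : ℤ) : O :=
  if 0 ≤ d then ∑ k ∈ Finset.range d.toNat, (t : O) ^ k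
  else -∑ k ∈ Finset.range (-d).toNat, ((t ^ (-((k : ℤ) + 1)) : Oˣ) : O)

/-! ## Nodes, multipartitions and standard tableaux -/

/-- A node `(l, r, c)`: component `l`, row `r`, column `c` (all `0`-based). -/
abbrev Node : Type := ℕ × ℕ × ℕ

/-- `nodeBelow A B` holds when `B` is strictly below `A`, i.e. `A < B` lexicographically. -/
def nodeBelow (A B : Node) : Prop :=
  A.1 < B.1 ∨ (A.1 = B.1 ∧ (A.2.1 < B.2.1 ∨ (A.2.1 = B.2.1 ∧ A.2.2 < B.2.2)))

/-- An `ℓ`-multipartition of `n`. -/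
structure Multipartition (ℓ n : ℕ) : Type where
  part : ℕ → ℕ → ℕ
  comp_bound : ∀ l, ℓ ≤ l → ∀ r, part l r = 0
  antitone : ∀ l, Antitone (part l)
  row_bound : ∀ l r, n ≤ r → part l r = 0
  size : (∑ l ∈ Finset.range ℓ, ∑ r ∈ Finset.range n, part l r) = n

/-- The diagram of a multipartition. -/
def Multipartition.diagram {ℓ n : ℕ} (μ : Multipartition ℓ n) : Set Node :=
  {A | A.2.2 < μ.part A.1 A.2.1}

/-- A standard tableau: a bijection from the diagram of its shape onto `{1, …, n}`
that increases along rows and down columns of each component (it takes the value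
`0` off the diagram, so that it is determined by its entries). -/
structure StdTableau (ℓ n : ℕ) : Type where
  shape : Multipartition ℓ n
  entry : Node → ℕ
  entry_zero : ∀ A, A ∉ shape.diagram → entry A = 0
  bijOn : Set.BijOn entry shape.diagram (Set.Icc 1 n)
  row_inc : ∀ l r c, (l, r, c + 1) ∈ shape.diagram → entry (l, r, c) < entry (l, r, c + 1)
  col_inc : ∀ l r c, (l, r + 1, c) ∈ shape.diagram → entry (l, r, c) < entry (l, r + 1, c)

/-- The node of a standard tableau containing the entry `k`. -/
noncomputable def StdTableau.node {ℓ n : ℕ} (T : StdTableau ℓ n) (k : ℕ) : Node :=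
  Function.invFunOn T.entry T.shape.diagram k

/-- The content `c_k(T) = κ_l + c - r` of the entry `k` in the tableau `T`
(`1 ≤ k ≤ n`). -/
noncomputable def content {ℓ n : ℕ} (κ : ℕ → ℤ) (T : StdTableau ℓ n) (k : ℕ) : ℤ :=
  κ (T.node k).1 + ((T.node k).2.2 : ℤ) - ((T.node k).2.1 : ℤ)

/-- The residue sequence of a standard tableau, in `I^n` with `I = ℤ/eℤ`. -/
noncomputable def resSeq {ℓ n : ℕ} (e : ℕ) (κ : ℕ → ℤ) (T : StdTableau ℓ n) :
    Fin n → ZMod e :=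
  fun k => ((content κ T (k.1 + 1) : ℤ) : ZMod e)

/-- The residue of a node. -/
def resNode (e : ℕ) (κ : ℕ → ℤ) (A : Node) : ZMod e :=
  ((κ A.1 + (A.2.2 : ℤ) - (A.2.1 : ℤ) : ℤ) : ZMod e)

/-- A set of nodes is the diagram of a multipartition (with at most `ℓ` components)
iff it is finite and downward closed in rows and columns. -/
def IsDiagramSet (ℓ : ℕ) (S : Set Node) : Prop :=
  S.Finite ∧ (∀ A ∈ S, A.1 < ℓ) ∧
    (∀ l r c, (l, r, c + 1) ∈ S → (l, r, c) ∈ S) ∧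
    (∀ l r c, (l, r + 1, c) ∈ S → (l, r, c) ∈ S)

/-- `A` is an addable node of the diagram `S`. -/
def Addable (ℓ : ℕ) (S : Set Node) (A : Node) : Prop :=
  A ∉ S ∧ IsDiagramSet ℓ (S ∪ {A})

/-- `A` is a removable node of the diagram `S`. -/
def Removable (ℓ : ℕ) (S : Set Node) (A : Node) : Prop :=
  A ∈ S ∧ IsDiagramSet ℓ (S \ {A})

/-- `d_A(S)`: the number of addable nodes of `S` of the same residue as `A` strictly
below `A`, minus the number of removable ones. -/
noncomputable def dNode (ℓ e : ℕ) (κ : ℕ → ℤ) (S : Set Node) (A : Node) : ℤ :=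
  (Set.ncard {B | Addable ℓ S B ∧ resNode e κ B = resNode e κ A ∧ nodeBelow A B} : ℤ) -
    (Set.ncard {B | Removable ℓ S B ∧ resNode e κ B = resNode e κ A ∧ nodeBelow A B} : ℤ)

/-- The Brundan–Kleshchev–Wang degree `deg_e(T)` of a standard tableau, written as the
telescoping sum of the recursion `deg_e(T) = deg_e(T↓(n-1)) + d_A(Shape(T))`. -/
noncomputable def degE {ℓ n : ℕ} (e : ℕ) (κ : ℕ → ℤ) (T : StdTableau ℓ n) : ℤ :=
  ∑ m ∈ Finset.Icc 1 n,
    dNode ℓ e κ {A | A ∈ T.shape.diagram ∧ T.entry A ≤ m} (T.node m)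

/-- The restriction of the diagram of `T` to entries `≤ m` (the diagram of `Shape(T↓m)`). -/
def restDiag {ℓ n : ℕ} (T : StdTableau ℓ n) (m : ℕ) : Set Node :=
  {A | A ∈ T.shape.diagram ∧ T.entry A ≤ m}

/-- Dominance order on standard tableaux: `domTab S T` iff `S ⊵ T`. -/
def domTab {ℓ n : ℕ} (S T : StdTableau ℓ n) : Prop :=
  ∀ m l i : ℕ,
    Set.ncard {A | A ∈ restDiag T m ∧ (A.1 < l ∨ (A.1 = l ∧ A.2.1 ≤ i))} ≤
      Set.ncard {A | A ∈ restDiag S m ∧ (A.1 < l ∨ (A.1 = l ∧ A.2.1 ≤ i))}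

/-- Interchange the entries `r` and `r + 1` in an entry function. -/
def swapEntry (f : Node → ℕ) (r : ℕ) : Node → ℕ :=
  fun A => if f A = r then r + 1 else if f A = r + 1 then r else f A

/-- `ρ_r(T) = c_r(T) - c_{r+1}(T)`, the axial distance. -/
noncomputable def rhoTab {ℓ n : ℕ} (κ : ℕ → ℤ) (T : StdTableau ℓ n) (r : ℕ) : ℤ :=
  content κ T r - content κ T (r + 1)

/-- The entry function of the row-reading initial tableau `t^λ`. -/
noncomputable def tlamEntry {ℓ n : ℕ} (μ : Multipartition ℓ n) (A : Node) : ℕ :=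
  if A ∈ μ.diagram then
    (∑ l ∈ Finset.range A.1, ∑ r ∈ Finset.range n, μ.part l r) +
      (∑ r ∈ Finset.range A.2.1, μ.part A.1 r) + A.2.2 + 1
  else 0

/-- The finite set of possible contents of standard tableaux of size `n`. -/
noncomputable def contFinset (ℓ n : ℕ) (κ : ℕ → ℤ) : Finset ℤ :=
  ((Finset.range ℓ ×ˢ Finset.range n ×ˢ Finset.range n).image
      (fun x => κ x.1 + (x.2.2 : ℤ) - (x.2.1 : ℤ))).filter
    (fun c => ∃ T : StdTableau ℓ n, ∃ k, 1 ≤ k ∧ k ≤ n ∧ content κ T k = c)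

/-- The standard tableau (if any) obtained from `T` by interchanging the entries
`r` and `r + 1`; i.e. `T·s_r` if it is standard, and `none` otherwise. -/
noncomputable def oSwapO {ℓ n : ℕ} (T : StdTableau ℓ n) (r : ℕ) :
    Option (StdTableau ℓ n) :=
  if h : ∃ V : StdTableau ℓ n, V.entry = swapEntry T.entry r then some (Classical.choose h)
  else none

/-- `oSwap` extended to `Option`. -/
noncomputable def oSwap {ℓ n : ℕ} (X : Option (StdTableau ℓ n)) (r : ℕ) :
    Option (StdTableau ℓ n) :=
  X.bind fun T => oSwapO T r

/-- Evaluate a seminormal coefficient system on an optional tableau (by `0` if none). -/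
noncomputable def aE {ℓ n : ℕ} {K : Type*} [Field K] (α : ℕ → StdTableau ℓ n → K) (r : ℕ)
    (X : Option (StdTableau ℓ n)) : K :=
  X.elim 0 (α r)

/-! ## Separation and idempotent subrings -/

/-- `(K, t)` separates `Std(P_n)` (field version):
`[n]!_t ∏_{1 ≤ l < m ≤ ℓ} ∏_{-n < d < n} [κ_l - κ_m + d]_t ≠ 0`. -/
def SeparatesF {K : Type*} [Field K] (t : Kˣ) (n ℓ : ℕ) (κ : ℕ → ℤ) : Prop :=
  ((∏ d ∈ Finset.Icc 1 n, qint (t : K) (d : ℤ)) *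
      ∏ l ∈ Finset.range ℓ, ∏ m ∈ Finset.Ioo l ℓ,
        ∏ d ∈ Finset.Ioo (-(n : ℤ)) (n : ℤ), qint (t : K) (κ l - κ m + d)) ≠ 0

/-- `(O, t)` separates `Std(P_n)` (subring version): the separation element is a unit. -/
def SeparatesU {O : Type*} [CommRing O] (t : Oˣ) (n ℓ : ℕ) (κ : ℕ → ℤ) : Prop :=
  IsUnit ((∏ d ∈ Finset.Icc 1 n, qintU t (d : ℤ)) *
      ∏ l ∈ Finset.range ℓ, ∏ m ∈ Finset.Ioo l ℓ,
        ∏ d ∈ Finset.Ioo (-(n : ℤ)) (n : ℤ), qintU t (κ l - κ m + d))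

/-- `(O, t)` is an `e`-idempotent subring of the field `K`. -/
def IsIdempotentSubring {K : Type*} [Field K] (O : Subring K) (t : Oˣ) (e n ℓ : ℕ)
    (κ : ℕ → ℤ) : Prop :=
  SeparatesU t n ℓ κ ∧
    (∀ k : ℤ, ¬(e : ℤ) ∣ k → IsUnit (qintU t k)) ∧
    (∀ k : ℤ, (e : ℤ) ∣ k → qintU t k ∈ Ideal.jacobson (⊥ : Ideal O))

/-! ## The cyclotomic Hecke algebra, by generators and relations -/

/-- Generators `L_1, …, L_n`, `T_1, …, T_{n-1}` (here `0`-based). -/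
inductive HeckeGen (n : ℕ) : Type
  | L : Fin n → HeckeGen n
  | T : Fin (n - 1) → HeckeGen n

/-- The position `r` of the pair `(r, r+1)` interchanged by the `r`-th transposition. -/
def pL {n : ℕ} (r : Fin (n - 1)) : Fin n := ⟨r.1, by have := r.2; omega⟩

/-- The position `r + 1` of the pair interchanged by the `r`-th transposition. -/
def pR {n : ℕ} (r : Fin (n - 1)) : Fin n := ⟨r.1 + 1, by have := r.2; omega⟩

/-- The position `r + 2`, used in braid relations. -/
def pM {n : ℕ} (r : Fin (n - 1)) (hr : r.1 + 1 < n - 1) : Fin n := ⟨r.1 + 2, by omega⟩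

/-- The free algebra generator `L_k`. -/
def hL (R : Type*) [CommRing R] {n : ℕ} (k : Fin n) : FreeAlgebra R (HeckeGen n) :=
  FreeAlgebra.ι R (HeckeGen.L k)

/-- The free algebra generator `T_r`. -/
def hT (R : Type*) [CommRing R] {n : ℕ} (r : Fin (n - 1)) : FreeAlgebra R (HeckeGen n) :=
  FreeAlgebra.ι R (HeckeGen.T r)

/-- The defining relations of the integral cyclotomic Hecke algebra `H_n(R, t, κ)`. -/
inductive HeckeRel (R : Type*) [CommRing R] (t : Rˣ) (n ℓ : ℕ) (κ : ℕ → ℤ) :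
    FreeAlgebra R (HeckeGen n) → FreeAlgebra R (HeckeGen n) → Prop
  | cyc (h : 0 < n) :
      HeckeRel R t n ℓ κ
        (((List.range ℓ).map fun l =>
          hL R (⟨0, h⟩ : Fin n) - algebraMap R _ (qintU t (κ l))).prod) 0
  | quad (r : Fin (n - 1)) :
      HeckeRel R t n ℓ κ ((hT R r + 1) * (hT R r - algebraMap R _ (t : R))) 0
  | LL (k m : Fin n) : HeckeRel R t n ℓ κ (hL R k * hL R m) (hL R m * hL R k)
  | TTfar (r s : Fin (n - 1)) (h : r.1 + 1 < s.1 ∨ s.1 + 1 < r.1) :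
      HeckeRel R t n ℓ κ (hT R r * hT R s) (hT R s * hT R r)
  | braid (r s : Fin (n - 1)) (h : s.1 = r.1 + 1) :
      HeckeRel R t n ℓ κ (hT R r * hT R s * hT R r) (hT R s * hT R r * hT R s)
  | TL (r : Fin (n - 1)) (k : Fin n) (h : k.1 ≠ r.1 ∧ k.1 ≠ r.1 + 1) :
      HeckeRel R t n ℓ κ (hT R r * hL R k) (hL R k * hT R r)
  | LT (r : Fin (n - 1)) :
      HeckeRel R t n ℓ κ (hL R (pR r) * (hT R r - algebraMap R _ (t : R) + 1))
        (hT R r * hL R (pL r) + 1)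

/-- The integral cyclotomic Hecke algebra of type `A`, `H_n(R, t, κ)`. -/
noncomputable abbrev CycHecke (R : Type*) [CommRing R] (t : Rˣ) (n ℓ : ℕ) (κ : ℕ → ℤ) :
    Type _ :=
  RingQuot (HeckeRel R t n ℓ κ)

/-- The generator `L_k` of the cyclotomic Hecke algebra. -/
noncomputable def Lgen (R : Type*) [CommRing R] (t : Rˣ) (n ℓ : ℕ) (κ : ℕ → ℤ)
    (k : Fin n) : CycHecke R t n ℓ κ :=
  RingQuot.mkAlgHom R (HeckeRel R t n ℓ κ) (hL R k)

/-- The generator `T_r` of the cyclotomic Hecke algebra. -/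
noncomputable def Tgen (R : Type*) [CommRing R] (t : Rˣ) (n ℓ : ℕ) (κ : ℕ → ℤ)
    (r : Fin (n - 1)) : CycHecke R t n ℓ κ :=
  RingQuot.mkAlgHom R (HeckeRel R t n ℓ κ) (hT R r)

end Paper
/-! ## Quiver Hecke (KLR) algebras, by generators and relations -/

namespace Paper

/-- Generators `e(i)` (`i ∈ I^n`), `ψ_1, …, ψ_{n-1}`, `y_1, …, y_n` (here `0`-based). -/
inductive KLRGen (n e : ℕ) : Type
  | idem : (Fin n → ZMod e) → KLRGen n e
  | psi : Fin (n - 1) → KLRGen n e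
  | y : Fin n → KLRGen n e

/-- The free algebra generator `e(i)`. -/
def kE (R : Type*) [CommRing R] {n e : ℕ} (i : Fin n → ZMod e) :
    FreeAlgebra R (KLRGen n e) :=
  FreeAlgebra.ι R (KLRGen.idem i)

/-- The free algebra generator `ψ_r`. -/
def kPsi (R : Type*) [CommRing R] {n e : ℕ} (r : Fin (n - 1)) :
    FreeAlgebra R (KLRGen n e) :=
  FreeAlgebra.ι R (KLRGen.psi r)

/-- The free algebra generator `y_k`. -/
def kY (R : Type*) [CommRing R] {n e : ℕ} (k : Fin n) : FreeAlgebra R (KLRGen n e) :=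
  FreeAlgebra.ι R (KLRGen.y k)

/-- `s_r · i`: interchange the entries of `i` at positions `r` and `r + 1`. -/
def swapSeq {n e : ℕ} (i : Fin n → ZMod e) (r : Fin (n - 1)) : Fin n → ZMod e :=
  fun k => if k = pL r then i (pR r) else if k = pR r then i (pL r) else i k

/-- The defining relations of the cyclotomic quiver Hecke algebra `R_n^Λ(R)` where
`Λ = Σ_l Λ_{κ_l mod e}`. -/
inductive KLRRel (R : Type*) [CommRing R] (n e ℓ : ℕ) [NeZero e] (κ : ℕ → ℤ) :
    FreeAlgebra R (KLRGen n e) → FreeAlgebra R (KLRGen n e) → Prop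
  | cyc (h : 0 < n) (i : Fin n → ZMod e) :
      KLRRel R n e ℓ κ
        ((kY R (⟨0, h⟩ : Fin n)) ^
            (((Finset.range ℓ).filter fun l => ((κ l : ZMod e) = i ⟨0, h⟩)).card) *
          kE R i) 0
  | orth (i j : Fin n → ZMod e) (h : i ≠ j) : KLRRel R n e ℓ κ (kE R i * kE R j) 0
  | idem (i : Fin n → ZMod e) : KLRRel R n e ℓ κ (kE R i * kE R i) (kE R i)
  | complete : KLRRel R n e ℓ κ (∑ i : Fin n → ZMod e, kE R i) 1
  | yE (k : Fin n) (i : Fin n → ZMod e) :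
      KLRRel R n e ℓ κ (kY R k * kE R i) (kE R i * kY R k)
  | psiE (r : Fin (n - 1)) (i : Fin n → ZMod e) :
      KLRRel R n e ℓ κ (kPsi R r * kE R i) (kE R (swapSeq i r) * kPsi R r)
  | yy (k m : Fin n) : KLRRel R n e ℓ κ (kY R k * kY R m) (kY R m * kY R k)
  | psiyEq (r : Fin (n - 1)) (i : Fin n → ZMod e) (h : i (pL r) = i (pR r)) :
      KLRRel R n e ℓ κ (kPsi R r * kY R (pR r) * kE R i)
        ((kY R (pL r) * kPsi R r + 1) * kE R i)
  | psiyNe (r : Fin (n - 1)) (i : Fin n → ZMod e) (h : i (pL r) ≠ i (pR r)) :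
      KLRRel R n e ℓ κ (kPsi R r * kY R (pR r) * kE R i)
        (kY R (pL r) * kPsi R r * kE R i)
  | ypsiEq (r : Fin (n - 1)) (i : Fin n → ZMod e) (h : i (pL r) = i (pR r)) :
      KLRRel R n e ℓ κ (kY R (pR r) * kPsi R r * kE R i)
        ((kPsi R r * kY R (pL r) + 1) * kE R i)
  | ypsiNe (r : Fin (n - 1)) (i : Fin n → ZMod e) (h : i (pL r) ≠ i (pR r)) :
      KLRRel R n e ℓ κ (kY R (pR r) * kPsi R r * kE R i)
        (kPsi R r * kY R (pL r) * kE R i)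
  | psiyFar (r : Fin (n - 1)) (k : Fin n) (h : k.1 ≠ r.1 ∧ k.1 ≠ r.1 + 1) :
      KLRRel R n e ℓ κ (kPsi R r * kY R k) (kY R k * kPsi R r)
  | psipsiFar (r s : Fin (n - 1)) (h : r.1 + 1 < s.1 ∨ s.1 + 1 < r.1) :
      KLRRel R n e ℓ κ (kPsi R r * kPsi R s) (kPsi R s * kPsi R r)
  | quadEq (r : Fin (n - 1)) (i : Fin n → ZMod e) (h : i (pL r) = i (pR r)) :
      KLRRel R n e ℓ κ (kPsi R r ^ 2 * kE R i) 0
  | quadR (r : Fin (n - 1)) (i : Fin n → ZMod e)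
      (h1 : i (pR r) = i (pL r) + 1) (h2 : i (pL r) ≠ i (pR r) + 1) :
      KLRRel R n e ℓ κ (kPsi R r ^ 2 * kE R i) ((kY R (pL r) - kY R (pR r)) * kE R i)
  | quadL (r : Fin (n - 1)) (i : Fin n → ZMod e)
      (h1 : i (pL r) = i (pR r) + 1) (h2 : i (pR r) ≠ i (pL r) + 1) :
      KLRRel R n e ℓ κ (kPsi R r ^ 2 * kE R i) ((kY R (pR r) - kY R (pL r)) * kE R i)
  | quadBoth (r : Fin (n - 1)) (i : Fin n → ZMod e)
      (h1 : i (pR r) = i (pL r) + 1) (h2 : i (pL r) = i (pR r) + 1) :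
      KLRRel R n e ℓ κ (kPsi R r ^ 2 * kE R i)
        ((kY R (pR r) - kY R (pL r)) * (kY R (pL r) - kY R (pR r)) * kE R i)
  | quadNone (r : Fin (n - 1)) (i : Fin n → ZMod e) (h1 : i (pL r) ≠ i (pR r))
      (h2 : i (pR r) ≠ i (pL r) + 1) (h3 : i (pL r) ≠ i (pR r) + 1) :
      KLRRel R n e ℓ κ (kPsi R r ^ 2 * kE R i) (kE R i)
  | braidR (r : Fin (n - 1)) (hr : r.1 + 1 < n - 1) (i : Fin n → ZMod e)
      (h0 : i (pM r hr) = i (pL r)) (h1 : i (pR r) = i (pL r) + 1)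
      (h2 : i (pL r) ≠ i (pR r) + 1) :
      KLRRel R n e ℓ κ (kPsi R r * kPsi R ⟨r.1 + 1, hr⟩ * kPsi R r * kE R i)
        ((kPsi R ⟨r.1 + 1, hr⟩ * kPsi R r * kPsi R ⟨r.1 + 1, hr⟩ - 1) * kE R i)
  | braidL (r : Fin (n - 1)) (hr : r.1 + 1 < n - 1) (i : Fin n → ZMod e)
      (h0 : i (pM r hr) = i (pL r)) (h1 : i (pL r) = i (pR r) + 1)
      (h2 : i (pR r) ≠ i (pL r) + 1) :
      KLRRel R n e ℓ κ (kPsi R r * kPsi R ⟨r.1 + 1, hr⟩ * kPsi R r * kE R i)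
        ((kPsi R ⟨r.1 + 1, hr⟩ * kPsi R r * kPsi R ⟨r.1 + 1, hr⟩ + 1) * kE R i)
  | braidBoth (r : Fin (n - 1)) (hr : r.1 + 1 < n - 1) (i : Fin n → ZMod e)
      (h0 : i (pM r hr) = i (pL r)) (h1 : i (pR r) = i (pL r) + 1)
      (h2 : i (pL r) = i (pR r) + 1) :
      KLRRel R n e ℓ κ (kPsi R r * kPsi R ⟨r.1 + 1, hr⟩ * kPsi R r * kE R i)
        ((kPsi R ⟨r.1 + 1, hr⟩ * kPsi R r * kPsi R ⟨r.1 + 1, hr⟩ +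
            kY R (pL r) - 2 * kY R (pR r) + kY R (pM r hr)) * kE R i)
  | braidNone (r : Fin (n - 1)) (hr : r.1 + 1 < n - 1) (i : Fin n → ZMod e)
      (h : ¬(i (pM r hr) = i (pL r) ∧
        (i (pR r) = i (pL r) + 1 ∨ i (pL r) = i (pR r) + 1))) :
      KLRRel R n e ℓ κ (kPsi R r * kPsi R ⟨r.1 + 1, hr⟩ * kPsi R r * kE R i)
        (kPsi R ⟨r.1 + 1, hr⟩ * kPsi R r * kPsi R ⟨r.1 + 1, hr⟩ * kE R i)

/-- The cyclotomic quiver Hecke algebra `R_n^Λ(R)`, `Λ = Σ_l Λ_{κ_l mod e}`. -/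
noncomputable abbrev KLR (R : Type*) [CommRing R] (n e ℓ : ℕ) [NeZero e] (κ : ℕ → ℤ) :
    Type _ :=
  RingQuot (KLRRel R n e ℓ κ)

/-- The generator `e(i)` of the cyclotomic quiver Hecke algebra. -/
noncomputable def KeGen (R : Type*) [CommRing R] (n e ℓ : ℕ) [NeZero e] (κ : ℕ → ℤ)
    (i : Fin n → ZMod e) : KLR R n e ℓ κ :=
  RingQuot.mkAlgHom R (KLRRel R n e ℓ κ) (kE R i)

/-- The generator `ψ_r` of the cyclotomic quiver Hecke algebra. -/
noncomputable def KpsiGen (R : Type*) [CommRing R] (n e ℓ : ℕ) [NeZero e] (κ : ℕ → ℤ)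
    (r : Fin (n - 1)) : KLR R n e ℓ κ :=
  RingQuot.mkAlgHom R (KLRRel R n e ℓ κ) (kPsi R r)

/-- The generator `y_k` of the cyclotomic quiver Hecke algebra. -/
noncomputable def KyGen (R : Type*) [CommRing R] (n e ℓ : ℕ) [NeZero e] (κ : ℕ → ℤ)
    (k : Fin n) : KLR R n e ℓ κ :=
  RingQuot.mkAlgHom R (KLRRel R n e ℓ κ) (kY R k)

end Paper
/-! ## The deformed cyclotomic quiver Hecke algebra -/

namespace Paper

/-- `y_k^⟨d⟩ = t^d y_k + [d]_t` in the free algebra. -/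
def ydot (R : Type*) [CommRing R] (t : Rˣ) {n e : ℕ} (d : ℤ) (k : Fin n) :
    FreeAlgebra R (KLRGen n e) :=
  algebraMap R _ ((t ^ d : Rˣ) : R) * kY R k + algebraMap R _ (qintU t d)

/-- `ρ_r(i) = î_r - î_{r+1}` for `i ∈ I^n`. -/
def rhoI {n e : ℕ} (i : Fin n → ZMod e) (r : Fin (n - 1)) : ℤ :=
  ((i (pL r)).val : ℤ) - ((i (pR r)).val : ℤ)

/-- The defining relations of the deformed cyclotomic quiver Hecke algebra `R_n(O)`. -/
inductive DefKLRRel (R : Type*) [CommRing R] (t : Rˣ) (n e ℓ : ℕ) [NeZero e] (κ : ℕ → ℤ) :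
    FreeAlgebra R (KLRGen n e) → FreeAlgebra R (KLRGen n e) → Prop
  | cyc (h : 0 < n) (i : Fin n → ZMod e) :
      DefKLRRel R t n e ℓ κ
        ((((List.range ℓ).map fun l =>
            if ((κ l : ZMod e) = i ⟨0, h⟩) then
              kY R (⟨0, h⟩ : Fin n) -
                algebraMap R _ (qintU t (κ l - ((i ⟨0, h⟩).val : ℤ)))
            else 1).prod) * kE R i) 0
  | orth (i j : Fin n → ZMod e) (h : i ≠ j) : DefKLRRel R t n e ℓ κ (kE R i * kE R j) 0
  | idem (i : Fin n → ZMod e) : DefKLRRel R t n e ℓ κ (kE R i * kE R i) (kE R i)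
  | complete : DefKLRRel R t n e ℓ κ (∑ i : Fin n → ZMod e, kE R i) 1
  | yE (k : Fin n) (i : Fin n → ZMod e) :
      DefKLRRel R t n e ℓ κ (kY R k * kE R i) (kE R i * kY R k)
  | psiE (r : Fin (n - 1)) (i : Fin n → ZMod e) :
      DefKLRRel R t n e ℓ κ (kPsi R r * kE R i) (kE R (swapSeq i r) * kPsi R r)
  | yy (k m : Fin n) : DefKLRRel R t n e ℓ κ (kY R k * kY R m) (kY R m * kY R k)
  | psiyEq (r : Fin (n - 1)) (i : Fin n → ZMod e) (h : i (pL r) = i (pR r)) :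
      DefKLRRel R t n e ℓ κ (kPsi R r * kY R (pR r) * kE R i)
        ((kY R (pL r) * kPsi R r + 1) * kE R i)
  | psiyNe (r : Fin (n - 1)) (i : Fin n → ZMod e) (h : i (pL r) ≠ i (pR r)) :
      DefKLRRel R t n e ℓ κ (kPsi R r * kY R (pR r) * kE R i)
        (kY R (pL r) * kPsi R r * kE R i)
  | ypsiEq (r : Fin (n - 1)) (i : Fin n → ZMod e) (h : i (pL r) = i (pR r)) :
      DefKLRRel R t n e ℓ κ (kY R (pR r) * kPsi R r * kE R i)
        ((kPsi R r * kY R (pL r) + 1) * kE R i)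
  | ypsiNe (r : Fin (n - 1)) (i : Fin n → ZMod e) (h : i (pL r) ≠ i (pR r)) :
      DefKLRRel R t n e ℓ κ (kY R (pR r) * kPsi R r * kE R i)
        (kPsi R r * kY R (pL r) * kE R i)
  | psiyFar (r : Fin (n - 1)) (k : Fin n) (h : k.1 ≠ r.1 ∧ k.1 ≠ r.1 + 1) :
      DefKLRRel R t n e ℓ κ (kPsi R r * kY R k) (kY R k * kPsi R r)
  | psipsiFar (r s : Fin (n - 1)) (h : r.1 + 1 < s.1 ∨ s.1 + 1 < r.1) :
      DefKLRRel R t n e ℓ κ (kPsi R r * kPsi R s) (kPsi R s * kPsi R r)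
  | quadEq (r : Fin (n - 1)) (i : Fin n → ZMod e) (h : i (pL r) = i (pR r)) :
      DefKLRRel R t n e ℓ κ (kPsi R r ^ 2 * kE R i) 0
  | quadR (r : Fin (n - 1)) (i : Fin n → ZMod e)
      (h1 : i (pR r) = i (pL r) + 1) (h2 : i (pL r) ≠ i (pR r) + 1) :
      DefKLRRel R t n e ℓ κ (kPsi R r ^ 2 * kE R i)
        ((ydot R t (1 + rhoI i r) (pL r) - kY R (pR r)) * kE R i)
  | quadL (r : Fin (n - 1)) (i : Fin n → ZMod e)
      (h1 : i (pL r) = i (pR r) + 1) (h2 : i (pR r) ≠ i (pL r) + 1) :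
      DefKLRRel R t n e ℓ κ (kPsi R r ^ 2 * kE R i)
        ((ydot R t (1 - rhoI i r) (pR r) - kY R (pL r)) * kE R i)
  | quadBoth (r : Fin (n - 1)) (i : Fin n → ZMod e)
      (h1 : i (pR r) = i (pL r) + 1) (h2 : i (pL r) = i (pR r) + 1) :
      DefKLRRel R t n e ℓ κ (kPsi R r ^ 2 * kE R i)
        ((ydot R t (1 + rhoI i r) (pL r) - kY R (pR r)) *
          (ydot R t (1 - rhoI i r) (pR r) - kY R (pL r)) * kE R i)
  | quadNone (r : Fin (n - 1)) (i : Fin n → ZMod e) (h1 : i (pL r) ≠ i (pR r))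
      (h2 : i (pR r) ≠ i (pL r) + 1) (h3 : i (pL r) ≠ i (pR r) + 1) :
      DefKLRRel R t n e ℓ κ (kPsi R r ^ 2 * kE R i) (kE R i)
  | braidBoth (r : Fin (n - 1)) (hr : r.1 + 1 < n - 1) (i : Fin n → ZMod e)
      (h0 : i (pM r hr) = i (pL r)) (h1 : i (pR r) = i (pL r) + 1)
      (h2 : i (pL r) = i (pR r) + 1) :
      DefKLRRel R t n e ℓ κ
        ((kPsi R r * kPsi R ⟨r.1 + 1, hr⟩ * kPsi R r -
            kPsi R ⟨r.1 + 1, hr⟩ * kPsi R r * kPsi R ⟨r.1 + 1, hr⟩) * kE R i)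
        ((ydot R t (1 + rhoI i r) (pL r) + ydot R t (1 + rhoI i r) (pM r hr) -
            ydot R t (1 + rhoI i r) (pR r) - ydot R t (1 - rhoI i r) (pR r)) * kE R i)
  | braidR (r : Fin (n - 1)) (hr : r.1 + 1 < n - 1) (i : Fin n → ZMod e)
      (h0 : i (pM r hr) = i (pL r)) (h1 : i (pR r) = i (pL r) + 1)
      (h2 : i (pL r) ≠ i (pR r) + 1) :
      DefKLRRel R t n e ℓ κ
        ((kPsi R r * kPsi R ⟨r.1 + 1, hr⟩ * kPsi R r -
            kPsi R ⟨r.1 + 1, hr⟩ * kPsi R r * kPsi R ⟨r.1 + 1, hr⟩) * kE R i)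
        (algebraMap R _ (-(((t ^ (1 + rhoI i r) : Rˣ) : R))) * kE R i)
  | braidL (r : Fin (n - 1)) (hr : r.1 + 1 < n - 1) (i : Fin n → ZMod e)
      (h0 : i (pM r hr) = i (pL r)) (h1 : i (pL r) = i (pR r) + 1)
      (h2 : i (pR r) ≠ i (pL r) + 1) :
      DefKLRRel R t n e ℓ κ
        ((kPsi R r * kPsi R ⟨r.1 + 1, hr⟩ * kPsi R r -
            kPsi R ⟨r.1 + 1, hr⟩ * kPsi R r * kPsi R ⟨r.1 + 1, hr⟩) * kE R i)
        (kE R i)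
  | braidNone (r : Fin (n - 1)) (hr : r.1 + 1 < n - 1) (i : Fin n → ZMod e)
      (h : ¬(i (pM r hr) = i (pL r) ∧
        (i (pR r) = i (pL r) + 1 ∨ i (pL r) = i (pR r) + 1))) :
      DefKLRRel R t n e ℓ κ
        ((kPsi R r * kPsi R ⟨r.1 + 1, hr⟩ * kPsi R r -
            kPsi R ⟨r.1 + 1, hr⟩ * kPsi R r * kPsi R ⟨r.1 + 1, hr⟩) * kE R i) 0

/-- The deformed cyclotomic quiver Hecke algebra `R_n(R)`. -/
noncomputable abbrev DefKLR (R : Type*) [CommRing R] (t : Rˣ) (n e ℓ : ℕ) [NeZero e]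
    (κ : ℕ → ℤ) : Type _ :=
  RingQuot (DefKLRRel R t n e ℓ κ)

/-- The generator `f_i` of the deformed cyclotomic quiver Hecke algebra. -/
noncomputable def DfGen (R : Type*) [CommRing R] (t : Rˣ) (n e ℓ : ℕ) [NeZero e]
    (κ : ℕ → ℤ) (i : Fin n → ZMod e) : DefKLR R t n e ℓ κ :=
  RingQuot.mkAlgHom R (DefKLRRel R t n e ℓ κ) (kE R i)

/-- The generator `ψ_r` of the deformed cyclotomic quiver Hecke algebra. -/
noncomputable def DpsiGen (R : Type*) [CommRing R] (t : Rˣ) (n e ℓ : ℕ) [NeZero e]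
    (κ : ℕ → ℤ) (r : Fin (n - 1)) : DefKLR R t n e ℓ κ :=
  RingQuot.mkAlgHom R (DefKLRRel R t n e ℓ κ) (kPsi R r)

/-- The generator `y_k` of the deformed cyclotomic quiver Hecke algebra. -/
noncomputable def DyGen (R : Type*) [CommRing R] (t : Rˣ) (n e ℓ : ℕ) [NeZero e]
    (κ : ℕ → ℤ) (k : Fin n) : DefKLR R t n e ℓ κ :=
  RingQuot.mkAlgHom R (DefKLRRel R t n e ℓ κ) (kY R k)

/-! ## Seminormal idempotents -/

/-- The seminormal idempotent `F_T` of the semisimple cyclotomic Hecke algebra: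
`F_T = ∏_{k=1}^n ∏_{c ∈ Cont(n), [c_k(T)] ≠ [c]} (L_k - [c]) / ([c_k(T)] - [c])`. -/
noncomputable def Fidem (K : Type*) [Field K] (tK : Kˣ) (n ℓ : ℕ) (κ : ℕ → ℤ)
    (T : StdTableau ℓ n) : CycHecke K tK n ℓ κ :=
  ((List.finRange n).map (fun k =>
    (((contFinset ℓ n κ).sort (· ≤ ·)).map (fun c =>
      if qint (tK : K) (content κ T (k.1 + 1)) ≠ qint (tK : K) c then
        (Lgen K tK n ℓ κ k - algebraMap K _ (qint (tK : K) c)) *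
          algebraMap K _ ((qint (tK : K) (content κ T (k.1 + 1)) - qint (tK : K) c)⁻¹)
      else 1)).prod)).prod

/-- The residue idempotent `f_i = Σ_{T ∈ Std(i)} F_T`. -/
noncomputable def fres (K : Type*) [Field K] (tK : Kˣ) (n ℓ e : ℕ) (κ : ℕ → ℤ)
    (i : Fin n → ZMod e) : CycHecke K tK n ℓ κ :=
  ∑ᶠ T : {T : StdTableau ℓ n // resSeq e κ T = i}, Fidem K tK n ℓ κ T.1

/-- The simultaneous two-sided eigenspace `H_{S,T}` of the Jucys–Murphy elements. -/
noncomputable def eigSub (K : Type*) [Field K] (tK : Kˣ) (n ℓ : ℕ) (κ : ℕ → ℤ)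
    (S T : StdTableau ℓ n) : Submodule K (CycHecke K tK n ℓ κ) where
  carrier := {h | ∀ k : Fin n,
      Lgen K tK n ℓ κ k * h = qint (tK : K) (content κ S (k.1 + 1)) • h ∧
      h * Lgen K tK n ℓ κ k = qint (tK : K) (content κ T (k.1 + 1)) • h}
  add_mem' := by
    intro a b ha hb
    intro k
    obtain ⟨h1, h2⟩ := ha k
    obtain ⟨h3, h4⟩ := hb k
    exact ⟨by rw [mul_add, h1, h3, smul_add], by rw [add_mul, h2, h4, smul_add]⟩
  zero_mem' := by intro k; simp
  smul_mem' := by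
    intro c a ha
    intro k
    obtain ⟨h1, h2⟩ := ha k
    constructor
    · rw [mul_smul_comm, h1, smul_comm]
    · rw [smul_mul_assoc, h2, smul_comm]

end Paper

namespace Paper

/-- The fraction field `ℚ(t)` of `ℚ[t]`. -/
noncomputable abbrev FFQ : Type := FractionRing (Polynomial ℚ)

/-- The image of the indeterminate `t` in `ℚ(t)`. -/
noncomputable def xQ : FFQ := algebraMap (Polynomial ℚ) FFQ Polynomial.X

/-- The exponent `d_e` determined by the residues mod `e` of the contents `ci`, `cj`. -/
noncomputable def dExp (e : ℕ) (ci cj : ℤ) : ℤ :=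
  if ((ci : ZMod e) = (cj : ZMod e)) then -2
  else if e = 2 ∧ ((cj : ZMod e) = (ci : ZMod e) + 1) then 2
  else if 2 < e ∧ (((cj : ZMod e) = (ci : ZMod e) + 1) ∨ ((ci : ZMod e) = (cj : ZMod e) + 1))
    then 1
  else 0

/-! The exponent `d_e` is a second difference: if `δ_e(z)` is `1` when `e ∣ z` and `0` otherwise,
then `d_e = δ_e(ρ + 1) - 2 δ_e(ρ) + δ_e(ρ - 1)` where `ρ` is the difference of the two contents.

In `ℚ(t)` this is the factorization `[m] = ∏_{e ≥ 2} Φ_e ^ δ_e(m)` together with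
`[-m] = -t⁻ᵐ [m]`. For degrees, order the nodes by rows. If `A` is removable in `S`, the addable
minus removable `i`-nodes below `A` can be counted as if every row ended in an addable and in a
removable node, since in two consecutive rows of equal length the two spurious nodes have the same
residue and cancel. So each row below `A` contributes separately, through a difference of `δ_e`,
and lengthening one of those rows by a node `B` changes the count by the second difference `d_e`,
while lengthening any other row changes nothing. In `deg_e(t) - deg_e(s)` only the nodes of `r` and
`r + 1` occur, and dominance says which of them lies in the lower row. -/

/-- The indicator of `e ∣ z`, that is, of two nodes whose contents differ by `z` having the same
residue modulo `e`. -/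
noncomputable def dvdIndicator (e : ℕ) (z : ℤ) : ℤ :=
  if (e : ℤ) ∣ z then 1 else 0

lemma dvdIndicator_neg (e : ℕ) (z : ℤ) : dvdIndicator e (-z) = dvdIndicator e z := by
  simp only [dvdIndicator, dvd_neg]

lemma dvdIndicator_eq_zero_of_abs_lt {e : ℕ} {z : ℤ} (hz : z ≠ 0) (h : |z| < e) :
    dvdIndicator e z = 0 :=
  if_neg fun hd => hz (Int.eq_zero_of_abs_lt_dvd hd h)

lemma dExp_eq_dvdIndicator {e : ℕ} (he : 2 ≤ e) (a b : ℤ) :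
    dExp e a b =
      dvdIndicator e (a - b + 1) - 2 * dvdIndicator e (a - b) + dvdIndicator e (a - b - 1) := by
  have hab : (a : ZMod e) = b ↔ (e : ℤ) ∣ a - b := by
    rw [eq_comm, ZMod.intCast_eq_intCast_iff_dvd_sub]
  have hba_succ : (b : ZMod e) = a + 1 ↔ (e : ℤ) ∣ a - b + 1 := by
    rw [show a - b + 1 = a + 1 - b by ring, ← ZMod.intCast_eq_intCast_iff_dvd_sub]
    push_cast
    rfl
  have hab_succ : (a : ZMod e) = b + 1 ↔ (e : ℤ) ∣ a - b - 1 := by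
    rw [eq_comm, show a - b - 1 = a - (b + 1) by ring, ← ZMod.intCast_eq_intCast_iff_dvd_sub]
    push_cast
    rfl
  simp only [dExp, dvdIndicator, hab, hba_succ, hab_succ]
  generalize a - b = z
  have not_dvd_one : ¬ (e : ℤ) ∣ 1 := fun h => by
    have := Int.le_of_dvd one_pos h
    omega
  have not_dvd_succ : (e : ℤ) ∣ z → ¬ (e : ℤ) ∣ z + 1 := fun h h' =>
    not_dvd_one ((dvd_add_right h).1 h')
  have not_dvd_pred : (e : ℤ) ∣ z → ¬ (e : ℤ) ∣ z - 1 := fun h h' =>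
    not_dvd_one ((dvd_sub_right h).1 h')
  have two_of_dvd : (e : ℤ) ∣ z + 1 → (e : ℤ) ∣ z - 1 → e = 2 := fun h h' => by
    have := Int.le_of_dvd two_pos (by simpa [← sub_add] using dvd_sub h h')
    omega
  have dvd_of_two : e = 2 → ((e : ℤ) ∣ z + 1 ↔ (e : ℤ) ∣ z - 1) := by
    rintro rfl
    omega
  split_ifs <;> grind

lemma dExp_comm {e : ℕ} (he : 2 ≤ e) (a b : ℤ) : dExp e a b = dExp e b a := by
  rw [dExp_eq_dvdIndicator he, dExp_eq_dvdIndicator he, ← dvdIndicator_neg e (a - b + 1),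
    ← dvdIndicator_neg e (a - b), ← dvdIndicator_neg e (a - b - 1)]
  ring_nf

section QuantumIntegers

variable {K : Type*} [Field K] {x : K}

lemma qint_natCast (x : K) (m : ℕ) : qint x m = ∑ k ∈ Finset.range m, x ^ k := by
  rw [qint, if_pos m.cast_nonneg, Int.toNat_natCast]

lemma qint_neg (hx : x ≠ 0) (d : ℤ) : qint x (-d) = -(x ^ (-d) * qint x d) := by
  have qint_neg_natCast (m : ℕ) : qint x (-m) = -(x ^ (-m : ℤ) * qint x m) := by
    rcases m.eq_zero_or_pos with rfl | hm
    · simp [qint]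
    rw [qint_natCast, qint, if_neg (by omega), neg_neg, Int.toNat_natCast,
      ← Finset.sum_range_reflect, Finset.mul_sum]
    refine congrArg _ (Finset.sum_congr rfl fun k hk => ?_)
    rw [Finset.mem_range] at hk
    rw [← zpow_natCast, ← zpow_add₀ hx]
    congr 1
    omega
  obtain ⟨m, rfl | rfl⟩ := d.eq_nat_or_neg
  · exact qint_neg_natCast m
  · rw [qint_neg_natCast, neg_neg, zpow_neg]
    field_simp

lemma qint_natCast_eq_prod_cyclotomic (x : K) {m N : ℕ} (hm : 0 < m) (hN : m ≤ N) :
    qint x m = ∏ e ∈ Finset.Icc 2 N, (Polynomial.cyclotomic e K).eval x ^ dvdIndicator e m := by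
  have divisors_erase_one : m.divisors.erase 1 = (Finset.Icc 2 N).filter (· ∣ m) := by
    ext e
    have le_of_dvd : e ∣ m → 0 < e ∧ e ≤ m :=
      fun h => ⟨Nat.pos_of_dvd_of_pos h hm, Nat.le_of_dvd hm h⟩
    simp only [Finset.mem_erase, Nat.mem_divisors, Finset.mem_filter, Finset.mem_Icc]
    grind
  rw [qint_natCast, ← Polynomial.eval_geom_sum, ← Polynomial.prod_cyclotomic_eq_geom_sum hm,
    Polynomial.eval_prod, divisors_erase_one, Finset.prod_filter]
  refine Finset.prod_congr rfl fun e _ => ?_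
  simp only [dvdIndicator, Int.natCast_dvd_natCast]
  split_ifs <;> simp

lemma zpow_dvdIndicator_mul {e : ℕ} (he : 2 ≤ e) (a b : ℤ) {y : K}
    (hy : y ^ dvdIndicator e (a - b) ≠ 0) :
    y ^ dvdIndicator e (a - b + 1) * y ^ dvdIndicator e (a - b - 1) =
      y ^ dExp e a b * (y ^ dvdIndicator e (a - b) * y ^ dvdIndicator e (a - b)) := by
  have hd := dExp_eq_dvdIndicator he a b
  by_cases hdvd : (e : ℤ) ∣ a - b
  · have hy0 : y ≠ 0 := by
      rintro rfl
      simp [dvdIndicator, hdvd] at hy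
    simp only [← zpow_add₀ hy0, hd]
    ring_nf
  · have indicator_eq : dvdIndicator e (a - b) = 0 := if_neg hdvd
    rw [hd, indicator_eq, mul_zero, sub_zero, zpow_zero, mul_one, mul_one, zpow_add']
    unfold dvdIndicator
    split_ifs <;> norm_num

lemma finprod_zpow_dExp_eq_prod {f : ℕ → K} {a b : ℤ} (hab : 1 < |a - b|) {N : ℕ}
    (hN : |a - b| < N) :
    ∏ᶠ (e : ℕ) (_ : 2 ≤ e), f e ^ dExp e a b = ∏ e ∈ Finset.Icc 2 N, f e ^ dExp e a b := by
  refine finprod_cond_eq_prod_of_cond_iff _ fun {e} hne => ?_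
  rw [Finset.mem_Icc, iff_self_and]
  refine fun he => not_lt.1 fun hlt => hne ?_
  rw [dExp_eq_dvdIndicator he, dvdIndicator_eq_zero_of_abs_lt, dvdIndicator_eq_zero_of_abs_lt,
    dvdIndicator_eq_zero_of_abs_lt]
  · simp
  all_goals grind

lemma qint_add_one_mul_qint_sub_one {m : ℕ} (hm : 2 ≤ m) (hq : qint x m ≠ 0) {a b : ℤ}
    (hab : a - b = m) :
    qint x (m + 1) * qint x (m - 1) =
      (∏ᶠ (e : ℕ) (_ : 2 ≤ e), (Polynomial.cyclotomic e K).eval x ^ dExp e a b) *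
        (qint x m * qint x m) := by
  have hfactor (k : ℕ) (hk : 0 < k) (hk' : k ≤ m + 1) :=
    qint_natCast_eq_prod_cyclotomic x hk hk'
  have hsucc := hfactor (m + 1) (by omega) le_rfl
  have hpred := hfactor (m - 1) (by omega) (by omega)
  rw [Nat.cast_succ] at hsucc
  rw [Nat.cast_pred (by omega)] at hpred
  rw [hfactor m (by omega) (by omega)] at hq ⊢
  rw [finprod_zpow_dExp_eq_prod (N := m + 1) (by grind) (by grind), hsucc, hpred]
  simp only [← Finset.prod_mul_distrib]
  refine Finset.prod_congr rfl fun e he => ?_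
  rw [← hab] at hq ⊢
  exact zpow_dvdIndicator_mul (Finset.mem_Icc.1 he).1 a b (Finset.prod_ne_zero_iff.1 hq e he)

theorem qint_div_eq_finprod_cyclotomic (hx : x ≠ 0) {a b : ℤ} (hab : 1 < |a - b|)
    (hq : qint x (a - b) ≠ 0) :
    qint x (1 + (a - b)) * qint x (1 + (b - a)) / (qint x (a - b) * qint x (b - a)) =
      x * ∏ᶠ (e : ℕ) (_ : 2 ≤ e), (Polynomial.cyclotomic e K).eval x ^ dExp e a b := by
  wlog hle : b ≤ a generalizing a b
  · have hq' : qint x (b - a) ≠ 0 := by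
      rw [← neg_sub, qint_neg hx]
      exact neg_ne_zero.2 (mul_ne_zero (zpow_ne_zero _ hx) hq)
    rw [mul_comm (qint x (1 + (a - b))), mul_comm (qint x (a - b)),
      this (by rwa [abs_sub_comm]) hq' (by omega)]
    refine congrArg _ (finprod_congr fun e => finprod_congr fun he => ?_)
    rw [dExp_comm he]
  obtain ⟨m, hm⟩ : ∃ m : ℕ, a - b = m := Int.eq_ofNat_of_zero_le (by omega)
  have hprod := qint_add_one_mul_qint_sub_one (by grind) (hm ▸ hq) hm
  rw [show b - a = -m by omega, hm, show 1 + (-m : ℤ) = -(m - 1) by ring, qint_neg hx,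
    qint_neg hx, show -((m : ℤ) - 1) = -m + 1 by ring, zpow_add_one₀ hx, add_comm 1 (m : ℤ)]
  rw [hm] at hq
  have hpow := zpow_ne_zero (-m : ℤ) hx
  rw [div_eq_iff (mul_ne_zero hq (neg_ne_zero.2 (mul_ne_zero hpow hq)))]
  linear_combination (-x * x ^ (-m : ℤ)) * hprod

end QuantumIntegers

section Diagrams

variable {ℓ : ℕ} {S : Set Node} {κ : ℕ → ℤ}

/-- The content `κ_l + c - r` of a node `(l, r, c)`, so that `content κ T k` is the content of
`T.node k`. -/
def nodeContent (κ : ℕ → ℤ) (A : Node) : ℤ :=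
  κ A.1 + A.2.2 - A.2.1

lemma resNode_eq_iff {e : ℕ} {A B : Node} :
    resNode e κ B = resNode e κ A ↔ (e : ℤ) ∣ nodeContent κ A - nodeContent κ B :=
  ZMod.intCast_eq_intCast_iff_dvd_sub _ _ _

lemma IsDiagramSet.mem_of_le (hS : IsDiagramSet ℓ S) {l r r' c c' : ℕ} (h : (l, r, c) ∈ S)
    (hr : r' ≤ r) (hc : c' ≤ c) : (l, r', c') ∈ S := by
  obtain ⟨-, -, row_closed, col_closed⟩ := hS
  have hrow : (l, r', c) ∈ S :=
    Nat.decreasingInduction (motive := fun k _ => (l, k, c) ∈ S)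
      (fun k _ ih => col_closed l k c ih) h hr
  exact Nat.decreasingInduction (motive := fun k _ => (l, r', k) ∈ S)
    (fun k _ ih => row_closed l r' k ih) hrow hc

/-- The length of row `r` of component `l` of a diagram `S`, encoded as the first column not in
`S`. -/
noncomputable def rowLength (S : Set Node) (l r : ℕ) : ℕ :=
  sInf {c | (l, r, c) ∉ S}

lemma mem_iff_lt_rowLength (hS : IsDiagramSet ℓ S) {l r c : ℕ} :
    (l, r, c) ∈ S ↔ c < rowLength S l r := by
  have exists_notMem : {c | (l, r, c) ∉ S}.Nonempty :=
    (hS.1.preimage (f := fun c => (l, r, c)) (by intro; grind)).exists_notMem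
  refine ⟨fun h => not_le.1 fun hle => Nat.sInf_mem exists_notMem (hS.mem_of_le h le_rfl hle),
    fun h => not_not.1 (Nat.notMem_of_lt_sInf h)⟩

lemma rowLength_antitone (hS : IsDiagramSet ℓ S) (l : ℕ) : Antitone (rowLength S l) :=
  fun _ _ hr => le_of_forall_lt fun _ hc =>
    (mem_iff_lt_rowLength hS).1 (hS.mem_of_le ((mem_iff_lt_rowLength hS).2 hc) hr le_rfl)

lemma rowLength_eq_zero (hS : IsDiagramSet ℓ S) {l r : ℕ} (h : (l, r, 0) ∉ S) :
    rowLength S l r = 0 := by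
  rwa [mem_iff_lt_rowLength hS, not_lt, Nat.le_zero] at h

lemma exists_forall_rowLength_eq_zero (hS : IsDiagramSet ℓ S) :
    ∃ N, ∀ l r, N ≤ r → rowLength S l r = 0 := by
  obtain ⟨N, hN⟩ := (hS.1.image fun A : Node => A.2.1).bddAbove
  refine ⟨N + 1, fun l r hr => rowLength_eq_zero hS fun hmem => ?_⟩
  have := hN (Set.mem_image_of_mem _ hmem)
  grind

lemma addable_iff (hS : IsDiagramSet ℓ S) {l r c : ℕ} :
    Addable ℓ S (l, r, c) ↔
      l < ℓ ∧ c = rowLength S l r ∧ (r = 0 ∨ rowLength S l r < rowLength S l (r - 1)) := by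
  have hmem {l r c : ℕ} := mem_iff_lt_rowLength hS (l := l) (r := r) (c := c)
  constructor
  · rintro ⟨hnot, -, hlt, row_closed, col_closed⟩
    refine ⟨hlt _ (Or.inr rfl), ?_, ?_⟩
    · rcases c with - | c
      · exact (rowLength_eq_zero hS hnot).symm
      · have := row_closed l r c (Or.inr rfl)
        grind
    · rcases r with - | r
      · exact Or.inl rfl
      · have := col_closed l r c (Or.inr rfl)
        grind
  · rintro ⟨hl, rfl, hr⟩
    obtain ⟨hfin, hlt, -, col_closed⟩ := hS
    refine ⟨by grind, hfin.union (Set.finite_singleton _), by grind, ?_, ?_⟩ <;> grind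

lemma removable_iff (hS : IsDiagramSet ℓ S) {l r c : ℕ} :
    Removable ℓ S (l, r, c) ↔
      c + 1 = rowLength S l r ∧ rowLength S l (r + 1) < rowLength S l r := by
  have hmem {l r c : ℕ} := mem_iff_lt_rowLength hS (l := l) (r := r) (c := c)
  constructor
  · rintro ⟨hA, -, -, row_closed, col_closed⟩
    have := row_closed l r c
    have := col_closed l r c
    grind
  · rintro ⟨hc, hr⟩
    obtain ⟨hfin, hlt, -, col_closed⟩ := hS
    refine ⟨by grind, hfin.sdiff, by grind, ?_, ?_⟩ <;> grind

lemma rowLength_union_singleton (hS : IsDiagramSet ℓ S) {X : Node} (hX : Addable ℓ S X)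
    (l r : ℕ) :
    rowLength (S ∪ {X}) l r =
      if l = X.1 ∧ r = X.2.1 then rowLength S l r + 1 else rowLength S l r := by
  obtain ⟨a, b, k⟩ := X
  obtain ⟨-, hk, -⟩ := (addable_iff hS).1 hX
  refine eq_of_forall_lt_iff fun c => ?_
  rw [← mem_iff_lt_rowLength hX.2]
  have := mem_iff_lt_rowLength hS (l := l) (r := r) (c := c)
  grind

/-- The row `(l, r)` is strictly below the row of the node `A`. -/
def rowBelow (A : Node) (l r : ℕ) : Prop :=
  A.1 < l ∨ (A.1 = l ∧ A.2.1 < r)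

/-- The number, `0` or `1`, of nodes below the row of `A` and with the residue of `A` that a node of
content `c` in row `(l, r)` accounts for. The node itself may be fictitious, so that only its row
and content are recorded. -/
noncomputable def belowIndicator (e : ℕ) (κ : ℕ → ℤ) (A : Node) (l r : ℕ) (c : ℤ) : ℤ :=
  if rowBelow A l r then dvdIndicator e (nodeContent κ A - c) else 0

/-- The contribution of a row `(l, r)` of length `k` to `d_A(S)` when both the node to the right of
its last node and its last node are counted, the former as addable and the latter as removable.
For `k = 0` the last node is a fictitious one, in column `-1`. -/
noncomputable def rowWeight (e : ℕ) (κ : ℕ → ℤ) (A : Node) (l r k : ℕ) : ℤ :=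
  belowIndicator e κ A l r (κ l + k - r) - belowIndicator e κ A l r (κ l + k - r - 1)

lemma rowWeight_succ_sub {e : ℕ} (he : 2 ≤ e) (A : Node) (l r k : ℕ) :
    rowWeight e κ A l r (k + 1) - rowWeight e κ A l r k =
      if rowBelow A l r then dExp e (nodeContent κ A) (nodeContent κ (l, r, k)) else 0 := by
  unfold rowWeight belowIndicator
  split_ifs
  · rw [dExp_eq_dvdIndicator he]
    simp only [nodeContent]
    push_cast
    ring_nf
  · exact sub_self _

lemma ncard_setOf_eq_sum_rows {P : Node → Prop} {M : ℕ} {g : ℕ → ℕ → ℕ} {q : ℕ → ℕ → Prop}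
    [∀ l r, Decidable (q l r)]
    (h : ∀ l r c, P (l, r, c) ↔ (l < ℓ ∧ r < M) ∧ c = g l r ∧ q l r) :
    ({B | P B}.ncard : ℤ) =
      ∑ l ∈ Finset.range ℓ, ∑ r ∈ Finset.range M, if q l r then 1 else 0 := by
  have hset : {B | P B} = (fun p : ℕ × ℕ => (p.1, p.2, g p.1 p.2)) ''
      ((Finset.range ℓ ×ˢ Finset.range M).filter fun p => q p.1 p.2 : Finset (ℕ × ℕ)) := by
    ext ⟨l, r, c⟩
    simp only [Set.mem_ofPred_eq, h, Set.mem_image, Finset.mem_coe, Finset.mem_filter,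
      Finset.mem_product, Finset.mem_range, Prod.exists, Prod.mk.injEq]
    grind
  rw [hset, Set.ncard_image_of_injective _ (by intro; grind), Set.ncard_coe_finset,
    Finset.card_filter, Finset.sum_product]
  push_cast
  rfl

lemma ncard_addable_below (hS : IsDiagramSet ℓ S) {e : ℕ} (he : 2 ≤ e) {A : Node}
    (hA : Removable ℓ S A) {N : ℕ} (hN : ∀ l r, N ≤ r → rowLength S l r = 0) :
    ({B | Addable ℓ S B ∧ resNode e κ B = resNode e κ A ∧ nodeBelow A B}.ncard : ℤ) =
      ∑ l ∈ Finset.range ℓ, ∑ r ∈ Finset.range (N + 1),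
        if r = 0 ∨ rowLength S l r < rowLength S l (r - 1) then
          belowIndicator e κ A l r (κ l + rowLength S l r - r)
        else 0 := by
  simp only [belowIndicator, dvdIndicator, ← ite_and]
  refine ncard_setOf_eq_sum_rows (g := rowLength S) fun l r c => ?_
  rw [addable_iff hS, resNode_eq_iff]
  obtain ⟨a, b, k⟩ := A
  obtain ⟨hk, -⟩ := (removable_iff hS).1 hA
  have not_dvd_right : ¬ (e : ℤ) ∣ nodeContent κ (a, b, k) - nodeContent κ (a, b, k + 1) := by
    have : nodeContent κ (a, b, k) - nodeContent κ (a, b, k + 1) = -1 := by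
      simp only [nodeContent]
      push_cast
      ring
    rw [this, dvd_neg]
    intro h
    have := Int.le_of_dvd one_pos h
    omega
  have := hN l (r - 1)
  have hcontent : κ l + c - r = nodeContent κ (l, r, c) := rfl
  simp only [nodeBelow, rowBelow]
  grind

lemma ncard_removable_below (hS : IsDiagramSet ℓ S) {e : ℕ} {A : Node}
    (hA : Removable ℓ S A) {N : ℕ} (hN : ∀ l r, N ≤ r → rowLength S l r = 0) :
    ({B | Removable ℓ S B ∧ resNode e κ B = resNode e κ A ∧ nodeBelow A B}.ncard : ℤ) =
      ∑ l ∈ Finset.range ℓ, ∑ r ∈ Finset.range N,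
        if rowLength S l (r + 1) < rowLength S l r then
          belowIndicator e κ A l r (κ l + rowLength S l r - r - 1)
        else 0 := by
  simp only [belowIndicator, dvdIndicator, ← ite_and]
  refine ncard_setOf_eq_sum_rows (g := fun l r => rowLength S l r - 1) fun l r c => ?_
  rw [removable_iff hS, resNode_eq_iff]
  obtain ⟨a, b, k⟩ := A
  obtain ⟨hk, -⟩ := (removable_iff hS).1 hA
  have := hN l r
  have hlt := fun h => hS.2.1 (l, r, c) ((mem_iff_lt_rowLength hS).2 h)
  have hcontent : κ l + (c + 1 : ℕ) - r - 1 = nodeContent κ (l, r, c) := by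
    simp only [nodeContent]
    push_cast
    ring
  simp only [nodeBelow, rowBelow]
  grind

lemma sum_range_succ_ite_sub_sum_range_ite {p : ℕ → Prop} [DecidablePred p] {u v : ℕ → ℤ}
    (hzero : p 0) (h : ∀ r, ¬ p (r + 1) → u (r + 1) = v r) (N : ℕ) :
    (∑ r ∈ Finset.range (N + 1), if p r then u r else 0) -
        (∑ r ∈ Finset.range N, if p (r + 1) then v r else 0) =
      ∑ r ∈ Finset.range N, (u r - v r) + u N := by
  induction N with
  | zero => simp [hzero]
  | succ N ih =>
    rw [Finset.sum_range_succ, Finset.sum_range_succ (fun r => if p (r + 1) then v r else 0),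
      Finset.sum_range_succ (fun r => u r - v r)]
    split_ifs with hp
    · linear_combination ih
    · linear_combination ih - h N hp

lemma belowIndicator_eq_of_rowLength_eq (hS : IsDiagramSet ℓ S) (e : ℕ) {A : Node}
    (hA : Removable ℓ S A) {l r : ℕ} (h : rowLength S l (r + 1) = rowLength S l r) :
    belowIndicator e κ A l (r + 1) (κ l + rowLength S l (r + 1) - (r + 1 : ℕ)) =
      belowIndicator e κ A l r (κ l + rowLength S l r - r - 1) := by
  obtain ⟨a, b, k⟩ := A
  obtain ⟨-, hlt⟩ := (removable_iff hS).1 hA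
  have : rowBelow (a, b, k) l (r + 1) ↔ rowBelow (a, b, k) l r := by
    simp only [rowBelow]
    grind
  simp only [belowIndicator, this, h]
  push_cast
  ring_nf

lemma dNode_eq_sum_rowWeight (hS : IsDiagramSet ℓ S) {e : ℕ} (he : 2 ≤ e) {A : Node}
    (hA : Removable ℓ S A) {N : ℕ} (hN : ∀ l r, N ≤ r → rowLength S l r = 0) :
    dNode ℓ e κ S A =
      ∑ l ∈ Finset.range ℓ, (∑ r ∈ Finset.range N, rowWeight e κ A l r (rowLength S l r) +
        belowIndicator e κ A l N (κ l - N)) := by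
  rw [dNode, ncard_addable_below hS he hA hN, ncard_removable_below hS hA hN,
    ← Finset.sum_sub_distrib]
  refine Finset.sum_congr rfl fun l _ => ?_
  have hcancel (r : ℕ) (h : ¬ (r + 1 = 0 ∨ rowLength S l (r + 1) < rowLength S l r)) :=
    belowIndicator_eq_of_rowLength_eq (κ := κ) hS e hA
      ((rowLength_antitone hS l r.le_succ).eq_of_not_lt fun hlt => h (Or.inr hlt))
  have hsum := sum_range_succ_ite_sub_sum_range_ite
    (p := fun r => r = 0 ∨ rowLength S l r < rowLength S l (r - 1))
    (u := fun r => belowIndicator e κ A l r (κ l + rowLength S l r - r)) (Or.inl rfl) hcancel N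
  simp only [Nat.succ_ne_zero, false_or, Nat.add_sub_cancel] at hsum
  rw [hsum, hN l N le_rfl, Nat.cast_zero, add_zero]
  rfl

theorem dNode_union_singleton_sub (hS : IsDiagramSet ℓ S) {e : ℕ} (he : 2 ≤ e) {A X : Node}
    (hX : Addable ℓ S X) (hA : Removable ℓ S A) (hA' : Removable ℓ (S ∪ {X}) A) :
    dNode ℓ e κ (S ∪ {X}) A - dNode ℓ e κ S A =
      if rowBelow A X.1 X.2.1 then dExp e (nodeContent κ A) (nodeContent κ X) else 0 := by
  obtain ⟨N, hN⟩ := exists_forall_rowLength_eq_zero hX.2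
  have hlength := rowLength_union_singleton hS hX
  have hXN : X.2.1 < N := not_le.1 fun h => by
    have := hN X.1 X.2.1 h
    grind
  have hXlength : X.2.2 = rowLength S X.1 X.2.1 := ((addable_iff hS).1 hX).2.1
  have hXlt : X.1 < ℓ := ((addable_iff hS).1 hX).1
  rw [dNode_eq_sum_rowWeight hX.2 he hA' hN,
    dNode_eq_sum_rowWeight hS he hA (N := N) fun l r hr => by grind, ← rowWeight_succ_sub he]
  simp only [← Finset.sum_sub_distrib, add_sub_add_right_eq_sub]
  rw [Finset.sum_eq_single_of_mem X.1 (Finset.mem_range.2 hXlt),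
    Finset.sum_eq_single_of_mem X.2.1 (Finset.mem_range.2 hXN)]
  · rw [hlength, if_pos ⟨rfl, rfl⟩, hXlength]
  · intro r _ hr
    rw [hlength, if_neg (by tauto), sub_self]
  · intro l _ hl
    refine Finset.sum_eq_zero fun r _ => ?_
    rw [hlength, if_neg (by tauto), sub_self]

end Diagrams

section Tableaux

variable {ℓ n : ℕ} {S T : StdTableau ℓ n}

lemma StdTableau.node_mem (T : StdTableau ℓ n) {k : ℕ} (hk : k ∈ Set.Icc 1 n) :
    T.node k ∈ T.shape.diagram :=
  Function.invFunOn_mem (T.bijOn.surjOn hk)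

lemma StdTableau.entry_node (T : StdTableau ℓ n) {k : ℕ} (hk : k ∈ Set.Icc 1 n) :
    T.entry (T.node k) = k :=
  Function.invFunOn_eq (T.bijOn.surjOn hk)

lemma StdTableau.node_entry (T : StdTableau ℓ n) {A : Node} (hA : A ∈ T.shape.diagram) :
    T.node (T.entry A) = A :=
  T.bijOn.injOn (T.node_mem (T.bijOn.mapsTo hA)) hA (T.entry_node (T.bijOn.mapsTo hA))

lemma isDiagramSet_restDiag (T : StdTableau ℓ n) (m : ℕ) : IsDiagramSet ℓ (restDiag T m) := by
  refine ⟨(T.bijOn.finite_iff_finite.2 (Set.finite_Icc 1 n)).subset fun _ hA => hA.1, ?_, ?_, ?_⟩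
  · rintro ⟨l, r, c⟩ ⟨hA : c < T.shape.part l r, -⟩
    by_contra! hl
    have := T.shape.comp_bound l hl r
    omega
  · rintro l r c ⟨hA, hm⟩
    exact ⟨(Nat.lt_succ_self c).trans hA, (T.row_inc l r c hA).le.trans hm⟩
  · rintro l r c ⟨hA, hm⟩
    exact ⟨lt_of_lt_of_le hA (T.shape.antitone l r.le_succ), (T.col_inc l r c hA).le.trans hm⟩

lemma restDiag_succ (T : StdTableau ℓ n) {m : ℕ} (hm : m < n) :
    restDiag T (m + 1) = restDiag T m ∪ {T.node (m + 1)} := by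
  have hmem := T.node_mem (k := m + 1) ⟨by omega, hm⟩
  have hentry := T.entry_node (k := m + 1) ⟨by omega, hm⟩
  ext A
  have := T.node_entry (A := A)
  simp only [restDiag, Set.mem_union, Set.mem_ofPred_eq, Set.mem_singleton_iff]
  grind

lemma node_succ_notMem_restDiag (T : StdTableau ℓ n) {m : ℕ} (hm : m < n) :
    T.node (m + 1) ∉ restDiag T m := fun h => by
  have := h.2
  rw [T.entry_node ⟨by omega, hm⟩] at this
  omega

lemma addable_node_succ (T : StdTableau ℓ n) {m : ℕ} (hm : m < n) :
    Addable ℓ (restDiag T m) (T.node (m + 1)) :=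
  ⟨node_succ_notMem_restDiag T hm, restDiag_succ T hm ▸ isDiagramSet_restDiag T (m + 1)⟩

lemma removable_node (T : StdTableau ℓ n) {m : ℕ} (hm : m ∈ Set.Icc 1 n) :
    Removable ℓ (restDiag T m) (T.node m) := by
  obtain ⟨m, rfl⟩ := Nat.exists_eq_add_of_le' hm.1
  rw [restDiag_succ T hm.2]
  refine ⟨Or.inr rfl, ?_⟩
  rw [Set.union_singleton, Set.insert_sdiff_self_of_notMem (node_succ_notMem_restDiag T hm.2)]
  exact isDiagramSet_restDiag T m

lemma degE_eq_sum (e : ℕ) (κ : ℕ → ℤ) (T : StdTableau ℓ n) :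
    degE e κ T = ∑ m ∈ Finset.Icc 1 n, dNode ℓ e κ (restDiag T m) (T.node m) :=
  rfl

/-- The tableaux `S` and `T` have the same shape, and `T` is obtained from `S` by interchanging
the entries `r` and `r + 1`. -/
structure IsSwap (S T : StdTableau ℓ n) (r : ℕ) : Prop where
  shape_eq : T.shape = S.shape
  entry_eq : T.entry = swapEntry S.entry r
  one_le : 1 ≤ r
  lt : r < n

namespace IsSwap

variable {r : ℕ} (h : IsSwap S T r)
include h

lemma symm : IsSwap T S r where
  shape_eq := h.shape_eq.symm
  entry_eq := by
    ext A
    simp only [h.entry_eq, swapEntry]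
    grind
  one_le := h.one_le
  lt := h.lt

lemma left_mem_Icc : r ∈ Set.Icc 1 n :=
  ⟨h.one_le, h.lt.le⟩

lemma right_mem_Icc : r + 1 ∈ Set.Icc 1 n :=
  ⟨r.succ_pos, h.lt⟩

lemma node_swapEntry {k : ℕ} (hk : k ∈ Set.Icc 1 n) :
    T.node (swapEntry (fun _ => k) r (S.node k)) = S.node k := by
  have hentry : T.entry (S.node k) = swapEntry (fun _ => k) r (S.node k) := by
    simp only [h.entry_eq, swapEntry, S.entry_node hk]
  rw [← hentry, T.node_entry (h.shape_eq ▸ S.node_mem hk)]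

lemma node_right : T.node (r + 1) = S.node r := by
  simpa [swapEntry] using h.node_swapEntry h.left_mem_Icc

lemma node_left : T.node r = S.node (r + 1) :=
  h.symm.node_right.symm

lemma node_of_ne {k : ℕ} (hk : k ∈ Set.Icc 1 n) (hr : k ≠ r) (hr' : k ≠ r + 1) :
    T.node k = S.node k := by
  simpa [swapEntry, hr, hr'] using h.node_swapEntry hk

lemma restDiag_of_ne {m : ℕ} (hm : m ≠ r) : restDiag T m = restDiag S m := by
  ext A
  simp only [restDiag, h.shape_eq, h.entry_eq, swapEntry, Set.mem_ofPred_eq]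
  grind

lemma column_lt_of_row_le (hcomp : (S.node r).1 = (S.node (r + 1)).1)
    (hrow : (S.node r).2.1 ≤ (S.node (r + 1)).2.1) :
    (S.node (r + 1)).2.2 < (S.node r).2.2 := by
  by_contra! hcol
  have hmem : T.node r ∈ restDiag T r := (removable_node T h.left_mem_Icc).1
  rw [h.node_left] at hmem
  have hmem' : ((S.node (r + 1)).1, (S.node r).2) ∈ restDiag T r :=
    (isDiagramSet_restDiag T r).mem_of_le hmem hrow hcol
  rw [← hcomp] at hmem'
  exact node_succ_notMem_restDiag T h.lt (h.node_right ▸ hmem')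

lemma row_ne (hcomp : (S.node r).1 = (S.node (r + 1)).1) :
    (S.node r).2.1 ≠ (S.node (r + 1)).2.1 := fun hrow => by
  have hlt := h.symm.column_lt_of_row_le
  rw [h.node_left, h.node_right] at hlt
  exact (h.column_lt_of_row_le hcomp hrow.le).asymm (hlt hcomp.symm hrow.ge)

lemma mem_restDiag_of_ne {A : Node} (hA : A ∈ restDiag S r) (hne : A ≠ S.node r) :
    A ∈ restDiag T r := by
  obtain ⟨hmem, hle⟩ := hA
  have : S.entry A ≠ r := fun hr => hne (by rw [← hr, S.node_entry hmem])
  refine ⟨h.shape_eq ▸ hmem, ?_⟩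
  simp only [h.entry_eq, swapEntry]
  grind

-- If the row of `r` were not above that of `r + 1`, then up to the row of `r + 1` there would be
-- more entries `≤ r` in `T` than in `S`.
lemma rowBelow_node_of_domTab (hdom : domTab S T) :
    rowBelow (S.node r) (S.node (r + 1)).1 (S.node (r + 1)).2.1 := by
  by_contra hnot
  have hmem : S.node (r + 1) ∈ restDiag T r :=
    h.node_left ▸ (removable_node T h.left_mem_Icc).1
  have hrow := h.row_ne
  refine (hdom r (S.node (r + 1)).1 (S.node (r + 1)).2.1).not_gt (Set.ncard_lt_ncard ?_
    ((isDiagramSet_restDiag T r).1.subset fun A hA => hA.1))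
  refine ⟨fun A hA => ⟨h.mem_restDiag_of_ne hA.1 ?_, hA.2⟩, fun hsubset =>
    node_succ_notMem_restDiag S h.lt (hsubset ⟨hmem, Or.inr ⟨rfl, le_rfl⟩⟩).1⟩
  rintro rfl
  have := hA.2
  simp only [rowBelow] at hnot
  omega

lemma dNode_restDiag_succ_sub {e : ℕ} (he : 2 ≤ e) (κ : ℕ → ℤ) :
    dNode ℓ e κ (restDiag S (r + 1)) (S.node r) - dNode ℓ e κ (restDiag S r) (S.node r) =
      if rowBelow (S.node r) (S.node (r + 1)).1 (S.node (r + 1)).2.1 then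
        dExp e (content κ S r) (content κ S (r + 1))
      else 0 := by
  have hremovable : Removable ℓ (restDiag S (r + 1)) (S.node r) := by
    rw [← h.restDiag_of_ne r.succ_ne_self, ← h.node_right]
    exact removable_node T h.right_mem_Icc
  rw [restDiag_succ S h.lt] at hremovable ⊢
  exact dNode_union_singleton_sub (isDiagramSet_restDiag S r) he (addable_node_succ S h.lt)
    (removable_node S h.left_mem_Icc) hremovable

lemma degE_sub (e : ℕ) (κ : ℕ → ℤ) :
    degE e κ T - degE e κ S =
      (dNode ℓ e κ (restDiag S (r + 1)) (S.node r) - dNode ℓ e κ (restDiag S r) (S.node r)) -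
        (dNode ℓ e κ (restDiag T (r + 1)) (T.node r) -
          dNode ℓ e κ (restDiag T r) (T.node r)) := by
  have hsubset : {r, r + 1} ⊆ Finset.Icc 1 n := by
    have := h.one_le
    have := h.lt
    grind
  rw [degE_eq_sum, degE_eq_sum, ← Finset.sum_sub_distrib,
    ← Finset.sum_subset hsubset fun m hm hne => ?_, Finset.sum_pair r.succ_ne_self.symm,
    h.restDiag_of_ne r.succ_ne_self, h.node_right, h.node_left]
  · ring
  · simp only [Finset.mem_insert, Finset.mem_singleton, not_or] at hne
    rw [h.restDiag_of_ne hne.1, h.node_of_ne (Finset.mem_Icc.1 hm) hne.1 hne.2, sub_self]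

theorem dExp_eq_degE_sub (hdom : domTab S T) {e : ℕ} (he : 2 ≤ e) (κ : ℕ → ℤ) :
    dExp e (content κ S r) (content κ S (r + 1)) = degE e κ T - degE e κ S := by
  have hbelow := h.rowBelow_node_of_domTab hdom
  have not_below : ¬ rowBelow (T.node r) (T.node (r + 1)).1 (T.node (r + 1)).2.1 := by
    rw [h.node_left, h.node_right]
    simp only [rowBelow] at hbelow ⊢
    omega
  rw [h.degE_sub, h.dNode_restDiag_succ_sub he, h.symm.dNode_restDiag_succ_sub he,
    if_pos hbelow, if_neg not_below, sub_zero]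

lemma rhoTab_right (κ : ℕ → ℤ) : rhoTab κ T r = content κ S (r + 1) - content κ S r := by
  simp only [rhoTab, content, h.node_left, h.node_right]

end IsSwap

lemma lt_sub_of_forall_lt_sub_succ {κ : ℕ → ℤ} {g : ℤ} (hκ : ∀ l, l + 1 < ℓ → g < κ l - κ (l + 1))
    (hg : 0 ≤ g) {a l : ℕ} (hal : a < l) (hl : l < ℓ) : g < κ a - κ l := by
  induction l, hal using Nat.le_induction with
  | base => exact hκ a hl
  | succ k _ ih =>
    have := ih (by omega)
    have := hκ k hl
    omega

namespace Multipartition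

variable {μ : Multipartition ℓ n} {A B : Node}

lemma row_lt_sum (hA : A ∈ μ.diagram) : A.2.1 < ∑ r ∈ Finset.range n, μ.part A.1 r := by
  have hpos : 0 < μ.part A.1 A.2.1 := A.2.2.zero_le.trans_lt hA
  have hlt : A.2.1 < n := not_le.1 fun h => by
    have := μ.row_bound A.1 A.2.1 h
    omega
  calc A.2.1 + 1 = ∑ r ∈ Finset.range (A.2.1 + 1), 1 := by simp
    _ ≤ ∑ r ∈ Finset.range (A.2.1 + 1), μ.part A.1 r := Finset.sum_le_sum fun r hr =>
        hpos.trans_le (μ.antitone A.1 (Nat.lt_succ_iff.1 (Finset.mem_range.1 hr)))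
    _ ≤ ∑ r ∈ Finset.range n, μ.part A.1 r :=
        Finset.sum_le_sum_of_subset (Finset.range_subset_range.2 hlt)

lemma column_lt_sum (hA : A ∈ μ.diagram) : A.2.2 < ∑ r ∈ Finset.range n, μ.part A.1 r := by
  have hlt : A.2.2 < μ.part A.1 A.2.1 := hA
  refine hlt.trans_le (Finset.single_le_sum_of_canonicallyOrdered (Finset.mem_range.2 ?_))
  by_contra! h
  have := μ.row_bound A.1 A.2.1 h
  omega

lemma component_lt (hA : A ∈ μ.diagram) : A.1 < ℓ := by
  have hlt : A.2.2 < μ.part A.1 A.2.1 := hA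
  by_contra! h
  have := μ.comp_bound A.1 h A.2.1
  omega

lemma row_add_column_lt (hA : A ∈ μ.diagram) (hB : B ∈ μ.diagram) (hne : A.1 ≠ B.1) :
    A.2.1 + B.2.2 + 1 < n := by
  have hrow := row_lt_sum hA
  have hcolumn := column_lt_sum hB
  have hsum := Finset.add_le_sum (s := Finset.range ℓ)
    (f := fun l => ∑ r ∈ Finset.range n, μ.part l r) (fun _ _ => Nat.zero_le _)
    (Finset.mem_range.2 (component_lt hA)) (Finset.mem_range.2 (component_lt hB)) hne
  rw [μ.size] at hsum
  omega

end Multipartition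

theorem IsSwap.one_lt_rhoTab {r : ℕ} (h : IsSwap S T r) (hdom : domTab S T) {κ : ℕ → ℤ}
    (hκ : ∀ l, l + 1 < ℓ → (n : ℤ) < κ l - κ (l + 1)) : 1 < rhoTab κ S r := by
  have hmem_left := S.node_mem h.left_mem_Icc
  have hmem_right := S.node_mem h.right_mem_Icc
  simp only [rhoTab, content]
  rcases h.rowBelow_node_of_domTab hdom with hcomp | ⟨hcomp, hrow⟩
  · have hgap := lt_sub_of_forall_lt_sub_succ hκ n.cast_nonneg hcomp
      (Multipartition.component_lt hmem_right)
    have := Multipartition.row_add_column_lt hmem_left hmem_right hcomp.ne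
    omega
  · have := h.column_lt_of_row_le hcomp hrow.le
    rw [hcomp]
    omega

end Tableaux

theorem gamma_recurrence_cyclotomic_general {K : Type*} [Field K] {x : K} (hx : x ≠ 0)
    {n ℓ : ℕ} {κ : ℕ → ℤ} {S T : StdTableau ℓ n} {r : ℕ} (h : IsSwap S T r)
    (hdom : domTab S T) (hρ : 1 < |rhoTab κ S r|) (hq : qint x (rhoTab κ S r) ≠ 0) :
    ((qint x (1 + rhoTab κ S r) * qint x (1 + rhoTab κ T r)) /
        (qint x (rhoTab κ S r) * qint x (rhoTab κ T r)) =
      x * ∏ᶠ (e : ℕ) (_ : 2 ≤ e),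
        (Polynomial.cyclotomic e K).eval x ^
          (dExp e (content κ S r) (content κ S (r + 1)))) ∧
    ∀ e : ℕ, 2 ≤ e →
      dExp e (content κ S r) (content κ S (r + 1)) = degE e κ T - degE e κ S := by
  refine ⟨?_, fun e he => h.dExp_eq_degE_sub hdom he κ⟩
  rw [h.rhoTab_right]
  exact qint_div_eq_finprod_cyclotomic hx hρ hq

lemma xQ_ne_zero : xQ ≠ 0 :=
  (map_ne_zero_iff _ (IsFractionRing.injective _ _)).2 Polynomial.X_ne_zero

lemma eval_xQ_cyclotomic (e : ℕ) :
    (Polynomial.cyclotomic e FFQ).eval xQ =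
      algebraMap (Polynomial ℚ) FFQ (Polynomial.cyclotomic e ℚ) := by
  rw [← Polynomial.map_cyclotomic e (algebraMap ℚ FFQ), Polynomial.eval_map_algebraMap, xQ,
    Polynomial.aeval_algebraMap_apply, Polynomial.aeval_X_left_apply]

lemma qint_xQ_ne_zero {z : ℤ} (hz : z ≠ 0) : qint xQ z ≠ 0 := by
  have natCast_ne_zero {m : ℕ} (hm : 0 < m) : qint xQ m ≠ 0 := by
    rw [qint_natCast_eq_prod_cyclotomic xQ hm le_rfl]
    refine Finset.prod_ne_zero_iff.2 fun e _ => zpow_ne_zero _ ?_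
    rw [eval_xQ_cyclotomic, map_ne_zero_iff _ (IsFractionRing.injective _ _)]
    exact Polynomial.cyclotomic_ne_zero e ℚ
  obtain ⟨m, rfl | rfl⟩ := z.eq_nat_or_neg
  · exact natCast_ne_zero (by omega)
  · rw [qint_neg xQ_ne_zero]
    exact neg_ne_zero.2 (mul_ne_zero (zpow_ne_zero _ xQ_ne_zero) (natCast_ne_zero (by omega)))

/-- for standard tableaux `s ⊳ t = s·(r, r+1)` of the same shape, with
`κ_l - κ_{l+1} > n`, in `ℚ(t)` one has
`([1+ρ_r(s)][1+ρ_r(t)])/([ρ_r(s)][ρ_r(t)]) = t ∏_{e ≥ 2} Φ_e(t)^{d_e}` where the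
exponents `d_e` are given by the residue cases, and moreover
`d_e = deg_e(t) - deg_e(s)` for every `e ≥ 2`. -/
theorem gamma_recurrence_cyclotomic (n ℓ : ℕ) (hℓ : 1 ≤ ℓ) (κ : ℕ → ℤ)
    (hκ : ∀ l, l + 1 < ℓ → (n : ℤ) < κ l - κ (l + 1))
    (S T : StdTableau ℓ n) (hshape : T.shape = S.shape)
    (r : ℕ) (hr1 : 1 ≤ r) (hrn : r < n)
    (hswap : T.entry = swapEntry S.entry r)
    (hdom : domTab S T) (hne : S ≠ T) :
    ((qint xQ (1 + rhoTab κ S r) * qint xQ (1 + rhoTab κ T r)) /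
        (qint xQ (rhoTab κ S r) * qint xQ (rhoTab κ T r)) =
      xQ * ∏ᶠ (e : ℕ) (_ : 2 ≤ e),
        (algebraMap (Polynomial ℚ) FFQ (Polynomial.cyclotomic e ℚ)) ^
          (dExp e (content κ S r) (content κ S (r + 1)))) ∧
    ∀ e : ℕ, 2 ≤ e →
      dExp e (content κ S r) (content κ S (r + 1)) = degE e κ T - degE e κ S := by
  have h : IsSwap S T r := ⟨hshape, hswap, hr1, hrn⟩
  have hρ := h.one_lt_rhoTab hdom hκ
  simp only [← eval_xQ_cyclotomic]
  exact gamma_recurrence_cyclotomic_general xQ_ne_zero h hdom (lt_abs.2 (Or.inl hρ))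
    (qint_xQ_ne_zero (by omega))

end Paper
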